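/- Let g be a compactly driven system with the USP such that for every x ∈ X the map g(·,x) : U → X is injective. Then the solution map Ψ : U^ℤ → X^ℤ, (Ψ(ū))_n = h(←u^n) where E(←u) = {h(←u)}, is injective, and Ψ is a topological embedding: a homeomorphism of U^ℤ onto its image Ψ(U^ℤ) (both spaces carrying the product topology). -/

import Mathlib

open Metric Set Filter Topology Function

universe u' v'

variable {U : Type u'} {X : Type v'}

/-- `proc g u j m x = φ_ū(m+j, m, x)`: apply `g_{u m}, g_{u (m+1)}, …, g_{u (m+j-1)}`
to `x`, in that order. -/
def proc (g : U → X → X) (u : ℤ → U) : ℕ → ℤ → X → X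
  | 0, _, x => x
  | j + 1, m, x => g (u (m + j)) (proc g u j m x)

/-- A solution of the driven system `g` for the input `u`. -/
def IsSolution (g : U → X → X) (u : ℤ → U) (x : ℤ → X) : Prop :=
  ∀ n : ℤ, x (n + 1) = g (u n) (x n)

/-- The unique solution property: every input has exactly one solution. -/
def USP (g : U → X → X) : Prop :=
  ∀ u : ℤ → U, ∃! x : ℤ → X, IsSolution g u x

/-- The set of reachable states at time `n`: `X_n(ū) = ⋂_{j ≥ 1} φ_ū(n, n - j, X)`. -/
def reach (g : U → X → X) (u : ℤ → U) (n : ℤ) : Set X :=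
  ⋂ j : ℕ, Set.range (proc g u (j + 1) (n - (j + 1)))

/-- The reachable set `X_U = ⋃ {X_n(ū) : n ∈ ℤ, ū ∈ U^ℤ}`. -/
def reachSet (g : U → X → X) : Set X :=
  ⋃ u : ℤ → U, ⋃ n : ℤ, reach g u n

/-- The left-infinite part `←u^n = (…, u_{n-2}, u_{n-1})` of an input `u`;
coordinate `k : ℕ` corresponds to time `n - 1 - k` (so `0` is the most recent one). -/
def leftOf (u : ℤ → U) (n : ℤ) : ℕ → U := fun k => u (n - 1 - (k : ℤ))

/-- The right-shift map `r : (…, u_{-2}, u_{-1}) ↦ (…, u_{-3}, u_{-2})`. -/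
def shift (w : ℕ → U) : ℕ → U := fun k => w (k + 1)

/-- The concatenation map `σ_v : (…, u_{-2}, u_{-1}) ↦ (…, u_{-2}, u_{-1}, v)`. -/
def append (v : U) (w : ℕ → U) : ℕ → U := fun k => Nat.casesOn k v w

/-- `encProc g w j = φ_ū(0, -j, ·)` for any input `ū` whose left-infinite part is `w`. -/
def encProc (g : U → X → X) : (ℕ → U) → ℕ → X → X
  | _, 0, x => x
  | w, j + 1, x => g (w 0) (encProc g (shift w) j x)

/-- The encoding map `E(←u) = X_0(ū) = ⋂_{j ≥ 1} φ_ū(0, -j, X)`. -/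
def enc (g : U → X → X) (w : ℕ → U) : Set X :=
  ⋂ j : ℕ, Set.range (encProc g w (j + 1))

/-- The map `g̃_v : (…, x_{-2}, x_{-1}) ↦ (…, x_{-2}, x_{-1}, g(v, x_{-1}))`. -/
def tildeg (g : U → X → X) (v : U) (x : ℕ → X) : ℕ → X :=
  fun k => Nat.casesOn k (g v (x 0)) x

/-- The Hausdorff semi-distance `dist(A, B) = sup_{a ∈ A} inf_{b ∈ B} d(a, b)`. -/
noncomputable def semiDist [MetricSpace X] (A B : Set X) : ℝ :=
  sSup ((fun a => Metric.infDist a B) '' A)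

/-!
The reachable set `⋂ j, φ(0, -j, X)` is a decreasing intersection of compact sets, each varying
upper hemicontinuously with the input; by compactness the intersection is upper hemicontinuous too,
and single-valuedness turns this into continuity of `h`. Thus `Ψ` is continuous. Since `Ψ(ū)` is a
solution for `ū`, two consecutive states determine the input between them by injectivity of
`g(·, x)`, so `Ψ` is injective, and a continuous injection from the compact space `U^ℤ` into a
Hausdorff space is a closed embedding.
-/

section Hemicontinuity

variable {α β γ ι : Type*} [TopologicalSpace α] [TopologicalSpace β] [TopologicalSpace γ]

theorem upperHemicontinuous_range [CompactSpace β] {f : α → β → γ} (hf : Continuous (uncurry f)) :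
    UpperHemicontinuous fun a ↦ range (f a) := by
  refine .of_forall_isOpen fun a V hV hsub ↦ ?_
  have hnear : ∀ b ∈ univ, ∀ᶠ p : α × β in 𝓝 (a, b), f p.1 p.2 ∈ V := fun b _ ↦
    hf.continuousAt.eventually (hV.mem_nhds (hsub (mem_range_self b)))
  have htube : ∀ᶠ a' in 𝓝 a, ∀ b ∈ univ, f a' b ∈ V :=
    isCompact_univ.eventually_forall_of_forall_eventually hnear
  filter_upwards [htube] with a' ha'
  exact range_subset_iff.2 fun b ↦ ha' b (mem_univ b)

theorem upperHemicontinuous_iInter_of_directed [T2Space β] [Nonempty ι] {F : ι → α → Set β}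
    (hdir : ∀ a, Directed (· ⊇ ·) fun i ↦ F i a) (hcpt : ∀ i a, IsCompact (F i a))
    (hF : ∀ i, UpperHemicontinuous (F i)) : UpperHemicontinuous fun a ↦ ⋂ i, F i a := by
  refine .of_forall_isOpen fun a V hV hsub ↦ ?_
  obtain ⟨i, hi⟩ : ∃ i, F i a ⊆ V :=
    exists_subset_nhds_of_isCompact (hdir a) (hcpt · a) fun b hb ↦ hV.mem_nhds (hsub hb)
  filter_upwards [(hF i).forall_isOpen a V hV hi] with a' ha'
  exact (iInter_subset _ i).trans ha'

end Hemicontinuity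

section ReachableSets

theorem encProc_succ_eq_encProc_apply (g : U → X → X) (w : ℕ → U) (j : ℕ) (x : X) :
    encProc g w (j + 1) x = encProc g w j (g (w j) x) := by
  induction j generalizing w with
  | zero => rfl
  | succ j ih => exact congrArg (g (w 0)) (ih (shift w))

theorem antitone_range_encProc (g : U → X → X) (w : ℕ → U) :
    Antitone fun j ↦ range (encProc g w j) :=
  antitone_nat_of_succ_le fun j ↦ range_subset_iff.2 fun x ↦
    ⟨g (w j) x, (encProc_succ_eq_encProc_apply g w j x).symm⟩

theorem mapsTo_enc_shift (g : U → X → X) (w : ℕ → U) :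
    MapsTo (g (w 0)) (enc g (shift w)) (enc g w) := by
  intro x hx
  refine mem_iInter.2 fun j ↦ ?_
  cases j with
  | zero => exact ⟨x, rfl⟩
  | succ j =>
    obtain ⟨y, hy⟩ := mem_iInter.1 hx j
    exact ⟨y, congrArg (g (w 0)) hy⟩

variable [TopologicalSpace U] [TopologicalSpace X] {g : U → X → X}

theorem continuous_shift : Continuous (shift : (ℕ → U) → ℕ → U) :=
  continuous_pi fun k ↦ continuous_apply (k + 1)

theorem continuous_encProc (hg : Continuous fun p : U × X ↦ g p.1 p.2) (j : ℕ) :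
    Continuous fun p : (ℕ → U) × X ↦ encProc g p.1 j p.2 := by
  induction j with
  | zero => exact continuous_snd
  | succ j ih =>
    have hhead : Continuous fun p : (ℕ → U) × X ↦ p.1 0 := (continuous_apply 0).comp continuous_fst
    exact hg.comp (hhead.prodMk (ih.comp (continuous_shift.prodMap continuous_id)))

theorem upperHemicontinuous_enc [CompactSpace X] [T2Space X]
    (hg : Continuous fun p : U × X ↦ g p.1 p.2) : UpperHemicontinuous (enc g) := by
  refine upperHemicontinuous_iInter_of_directed (fun w ↦ ?directed) (fun j w ↦ ?compact)
    fun j ↦ upperHemicontinuous_range (continuous_encProc hg (j + 1))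
  case directed =>
    exact ((antitone_range_encProc g w).comp_monotone Order.succ_mono).directed_ge
  case compact =>
    exact isCompact_range ((continuous_encProc hg (j + 1)).comp (Continuous.prodMk_right w))

theorem continuous_of_enc_eq_singleton [CompactSpace X] [T2Space X]
    (hg : Continuous fun p : U × X ↦ g p.1 p.2) {h : (ℕ → U) → X}
    (hh : ∀ w, enc g w = {h w}) : Continuous h := by
  rw [← upperHemicontinuous_singleton_iff, ← funext hh]
  exact upperHemicontinuous_enc hg

end ReachableSets

theorem leftOf_succ_zero (u : ℤ → U) (n : ℤ) : leftOf u (n + 1) 0 = u n := by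
  simp [leftOf]

theorem shift_leftOf_succ (u : ℤ → U) (n : ℤ) : shift (leftOf u (n + 1)) = leftOf u n := by
  funext k
  simp only [shift, leftOf]
  congr 1
  push_cast
  ring

theorem continuous_leftOf [TopologicalSpace U] (n : ℤ) :
    Continuous fun u : ℤ → U ↦ leftOf u n :=
  continuous_pi fun k ↦ continuous_apply (n - 1 - (k : ℤ))

theorem IsSolution.input_unique {g : U → X → X} (hinj : ∀ x, Injective fun v ↦ g v x)
    {u v : ℤ → U} {x : ℤ → X} (hu : IsSolution g u x) (hv : IsSolution g v x) : u = v :=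
  funext fun n ↦ hinj (x n) ((hu n).symm.trans (hv n))

/-- The solution map `Ψ(ū) = (h(←u^n))_{n ∈ ℤ}` induced by a map `h` on left-infinite inputs. It is
defined for every `h`; the case of interest is `enc g w = {h w}`. -/
def solutionMap (h : (ℕ → U) → X) (u : ℤ → U) : ℤ → X :=
  fun n ↦ h (leftOf u n)

theorem continuous_solutionMap [TopologicalSpace U] [TopologicalSpace X] {h : (ℕ → U) → X}
    (hh : Continuous h) : Continuous (solutionMap h) :=
  continuous_pi fun n ↦ hh.comp (continuous_leftOf n)

theorem isSolution_solutionMap {g : U → X → X} {h : (ℕ → U) → X} (hh : ∀ w, enc g w = {h w})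
    (u : ℤ → U) : IsSolution g u (solutionMap h u) := by
  intro n
  have hstep := mapsTo_enc_shift g (leftOf u (n + 1))
  rw [shift_leftOf_succ, leftOf_succ_zero, hh, hh, mapsTo_singleton, mem_singleton_iff] at hstep
  exact hstep.symm

theorem solutionMap_injective {g : U → X → X} (hinj : ∀ x, Injective fun v ↦ g v x)
    {h : (ℕ → U) → X} (hh : ∀ w, enc g w = {h w}) : Injective (solutionMap h) := by
  intro u v huv
  have hv : IsSolution g v (solutionMap h u) := huv ▸ isSolution_solutionMap hh v
  exact (isSolution_solutionMap hh u).input_unique hinj hv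

theorem stmt_16_general [TopologicalSpace X] [CompactSpace X] [T2Space X]
    [TopologicalSpace U] [CompactSpace U]
    {g : U → X → X} (hg : Continuous fun p : U × X ↦ g p.1 p.2)
    (hinj : ∀ x : X, Injective fun v : U ↦ g v x)
    {h : (ℕ → U) → X} (hh : ∀ w : ℕ → U, enc g w = {h w}) :
    IsClosedEmbedding (solutionMap h) :=
  (continuous_solutionMap (continuous_of_enc_eq_singleton hg hh)).isClosedEmbedding
    (solutionMap_injective hinj hh)

/-- under the USP, if `g(·, x)` is injective for every `x ∈ X`, then the
solution map `Ψ(ū) = (h(←u^n))_{n ∈ ℤ}` is injective and is a topological embedding,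
i.e. a homeomorphism of `U^ℤ` onto its image. -/
theorem stmt_16 [MetricSpace X] [CompactSpace X] [MetricSpace U] [CompactSpace U]
    (g : U → X → X) (hg : Continuous fun p : U × X => g p.1 p.2)
    (husp : USP g) (hinj : ∀ x : X, Function.Injective fun v : U => g v x)
    (h : (ℕ → U) → X) (hh : ∀ w : ℕ → U, enc g w = {h w}) :
    Function.Injective (fun (u : ℤ → U) (n : ℤ) => h (leftOf u n)) ∧
      Topology.IsEmbedding (fun (u : ℤ → U) (n : ℤ) => h (leftOf u n)) := by
  have hΨ : IsClosedEmbedding (solutionMap h) := stmt_16_general hg hinj hh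
  exact ⟨hΨ.injective, hΨ.isEmbedding⟩
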